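/- Unisolvency of the first enriched triple: let v₁, v₂, v₃ ∈ ℝ² be affinely independent with barycentric coordinates λᵢ, let γⱼ(t) = ((1+t)/2) v_{j+1} + ((1-t)/2) v_{j+2} (indices modulo 3), and fix μ ≥ 1, σ > 0. Define, for f : ℝ² → ℝ, the six functionals I_j(f) = ∫_{-1}^{1} f(γⱼ(t)) k̃_{σ,μ}(t) dt and L_j(f) = ∫_{-1}^{1} p_{σ,μ}(t) f(γⱼ(t)) k̃_{σ,μ}(t) dt, j = 1,2,3. If p₂ = Σᵢ₌₁³ aᵢ λᵢ + Σᵢ₌₁³ bᵢ λᵢ² with real coefficients aᵢ, bᵢ satisfies I_j(p₂) = 0 and L_j(p₂) = 0 for j = 1,2,3, then a₁ = a₂ = a₃ = b₁ = b₂ = b₃ = 0, and hence p₂ is the zero function. -/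

import Mathlib

open MeasureTheory

/-- Lower incomplete gamma function `γ(s,z) = ∫₀^z u^(s-1) e^(-u) du`. -/
noncomputable def lowGamma (s z : ℝ) : ℝ := ∫ u in (0:ℝ)..z, u ^ (s - 1) * Real.exp (-u)

/-- Modified lower incomplete gamma function `γ^mod(s,z) = γ(s,z)/z^s`. -/
noncomputable def gammaMod (s z : ℝ) : ℝ := lowGamma s z / z ^ s

/-- First family of densities `k̃_{σ,μ}` on `[-1,1]`. -/
noncomputable def kTilde (σ μ t : ℝ) : ℝ :=
  (μ / gammaMod ((4 * μ - 3) / (2 * μ)) (1 / (2 * σ ^ (2 * μ)))) *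
    (t ^ 2) ^ (2 * μ - 2) * Real.exp (-(1 / 2) * (t ^ 2 / σ ^ 2) ^ μ)

/-- Second moment `t_{2,σ,μ}` of `k̃_{σ,μ}`. -/
noncomputable def tMom2 (σ μ : ℝ) : ℝ := ∫ t in (-1:ℝ)..1, t ^ 2 * kTilde σ μ t

/-- The orthogonal quadratic polynomial `p_{σ,μ}(t) = t² - t_{2,σ,μ}`. -/
noncomputable def pPoly (σ μ t : ℝ) : ℝ := t ^ 2 - tMom2 σ μ

/-- Parametrization of the edge `s_j` of the triangle, opposite to the vertex `v j`
(indices taken cyclically in `Fin 3`). -/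
noncomputable def edgeParam (v : Fin 3 → ℝ × ℝ) (j : Fin 3) (t : ℝ) : ℝ × ℝ :=
  ((1 + t) / 2) • v (j + 1) + ((1 - t) / 2) • v (j + 2)

/-!
On an edge of the triangle the quadratic is a polynomial `c₀ + c₁ t + c₂ t²` in the edge parameter.
Since the weight is even, the odd part is invisible to both edge functionals, so the even part
`e = c₀ + c₂ t²` is orthogonal to `1` and to `t² - m`. But `e` is itself a linear combination of
these two functions, so `∫ e² w = 0` and `e = 0`. Thus `c₀ = c₂ = 0` on each edge, which says that
the coefficients `aᵢ`, and likewise the `bᵢ`, at the two ends of every edge are opposite; since the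
edges form a cycle of odd length, all of them vanish.
-/

theorem intervalIntegral_eq_zero_of_odd {E : Type*} [NormedAddCommGroup E] [NormedSpace ℝ E]
    {f : ℝ → E} (hf : f.Odd) (r : ℝ) : ∫ t in -r..r, f t = 0 := by
  have h : ∫ t in -r..r, f t = -∫ t in -r..r, f t := by
    simpa only [hf.eq, intervalIntegral.integral_neg, neg_neg] using
      (intervalIntegral.integral_comp_neg (a := -r) (b := r) f).symm
  have : IsAddTorsionFree E := .of_isTorsionFree ℝ E
  exact self_eq_neg.mp h

section EvenWeight

variable {w f g : ℝ → ℝ} {r : ℝ}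

theorem intervalIntegral_add_odd_mul_even (hw : IntervalIntegrable w volume (-r) r)
    (hw_even : w.Even) (hf : ContinuousOn f (Set.uIcc (-r) r))
    (hg : ContinuousOn g (Set.uIcc (-r) r)) (hg_odd : g.Odd) :
    ∫ t in -r..r, (f t + g t) * w t = ∫ t in -r..r, f t * w t := by
  have hgw : ∫ t in -r..r, g t * w t = 0 :=
    intervalIntegral_eq_zero_of_odd (hg_odd.mul_even hw_even) r
  simp only [add_mul]
  rw [intervalIntegral.integral_add (hw.continuousOn_mul hf) (hw.continuousOn_mul hg), hgw,
    add_zero]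

theorem eqOn_zero_of_integral_sq_mul_eq_zero {a b : ℝ} (hab : a < b)
    (hw : IntervalIntegrable w volume a b) (hw_pos : ∀ᵐ t ∂volume.restrict (Set.Ioc a b), 0 < w t)
    (hf : ContinuousOn f (Set.Icc a b)) (h : ∫ t in a..b, f t ^ 2 * w t = 0) :
    Set.EqOn f 0 (Set.Icc a b) := by
  have hint : IntervalIntegrable (fun t => f t ^ 2 * w t) volume a b :=
    hw.continuousOn_mul (by rw [Set.uIcc_of_le hab.le]; exact hf.pow 2)
  have hnonneg : 0 ≤ᵐ[volume.restrict (Set.Ioc a b)] fun t => f t ^ 2 * w t := by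
    filter_upwards [hw_pos] with t ht using mul_nonneg (sq_nonneg _) ht.le
  rw [intervalIntegral.integral_eq_zero_iff_of_le_of_nonneg_ae hab.le hnonneg hint] at h
  have hf_ae : f =ᵐ[volume.restrict (Set.Icc a b)] 0 := by
    rw [← restrict_Ioc_eq_restrict_Icc]
    filter_upwards [h, hw_pos] with t ht hwt
    simpa [hwt.ne'] using ht
  exact Measure.eqOn_Icc_of_ae_eq volume hab.ne hf_ae hf continuousOn_const

theorem even_coeffs_eq_zero_of_integral_quadratic_mul (hr : 0 < r)
    (hw : IntervalIntegrable w volume (-r) r) (hw_even : w.Even)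
    (hw_pos : ∀ᵐ t ∂volume.restrict (Set.Ioc (-r) r), 0 < w t) {c₀ c₁ c₂ m : ℝ}
    (h₀ : ∫ t in -r..r, (c₀ + c₁ * t + c₂ * t ^ 2) * w t = 0)
    (h₂ : ∫ t in -r..r, (t ^ 2 - m) * (c₀ + c₁ * t + c₂ * t ^ 2) * w t = 0) :
    c₀ = 0 ∧ c₂ = 0 := by
  let e : ℝ → ℝ := fun t => c₀ + c₂ * t ^ 2
  have he : Continuous e := by fun_prop
  have he₀ : ∫ t in -r..r, e t * w t = 0 := by
    rw [← h₀, ← intervalIntegral_add_odd_mul_even hw hw_even he.continuousOn (g := fun t => c₁ * t)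
      (by fun_prop) fun t => by ring]
    exact intervalIntegral.integral_congr fun t _ => by simp only [e]; ring
  have he₂ : ∫ t in -r..r, (t ^ 2 - m) * e t * w t = 0 := by
    rw [← h₂, ← intervalIntegral_add_odd_mul_even hw hw_even (f := fun t => (t ^ 2 - m) * e t)
      (g := fun t => (t ^ 2 - m) * (c₁ * t)) (by fun_prop) (by fun_prop) fun t => by ring]
    exact intervalIntegral.integral_congr fun t _ => by simp only [e]; ring
  have he_sq : ∫ t in -r..r, e t ^ 2 * w t = 0 := calc
    _ = ∫ t in -r..r, (c₂ * ((t ^ 2 - m) * e t * w t) + (c₀ + c₂ * m) * (e t * w t)) :=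
      intervalIntegral.integral_congr fun t _ => by simp only [e]; ring
    _ = c₂ * (∫ t in -r..r, (t ^ 2 - m) * e t * w t)
          + (c₀ + c₂ * m) * ∫ t in -r..r, e t * w t := by
      rw [intervalIntegral.integral_add, intervalIntegral.integral_const_mul,
        intervalIntegral.integral_const_mul]
      · exact (hw.continuousOn_mul (by fun_prop)).const_mul c₂
      · exact (hw.continuousOn_mul he.continuousOn).const_mul _
    _ = 0 := by rw [he₂, he₀, mul_zero, mul_zero, add_zero]
  have he_zero := eqOn_zero_of_integral_sq_mul_eq_zero (neg_lt_self hr) hw hw_pos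
    he.continuousOn he_sq
  have hc₀ : c₀ = 0 := by simpa [e] using he_zero (x := 0) ⟨by linarith, hr.le⟩
  have hc₂ : c₂ = 0 := by simpa [e, hc₀, hr.ne'] using he_zero (x := r) ⟨by linarith, le_rfl⟩
  exact ⟨hc₀, hc₂⟩

end EvenWeight

section BarycentricQuadratic

variable {V P ι : Type*} [AddCommGroup V] [Module ℝ V] [AddTorsor V P]

/-- The quadratic function `∑ aᵢ λᵢ + ∑ bᵢ λᵢ²` attached to a finite family of affine maps `λᵢ`,
to be used when these are barycentric coordinates. -/
def baryQuadratic [Fintype ι] (lam : ι → P →ᵃ[ℝ] ℝ) (a b : ι → ℝ) (x : P) : ℝ :=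
  (∑ i, a i * lam i x) + ∑ i, b i * lam i x ^ 2

variable {v : ι → P} {lam : ι → P →ᵃ[ℝ] ℝ}

theorem barycentric_lineMap [DecidableEq ι]
    (hkr : ∀ i j, lam i (v j) = if i = j then 1 else 0) (k i j : ι) (s : ℝ) :
    lam k (AffineMap.lineMap (v i) (v j) s) =
      (1 - s) * (if k = i then 1 else 0) + s * if k = j then 1 else 0 := by
  rw [AffineMap.apply_lineMap, AffineMap.lineMap_apply_ring, hkr, hkr]

theorem baryQuadratic_lineMap [Fintype ι] [DecidableEq ι]
    (hkr : ∀ i j, lam i (v j) = if i = j then 1 else 0) (a b : ι → ℝ) {i j : ι} (hij : i ≠ j)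
    (s : ℝ) :
    baryQuadratic lam a b (AffineMap.lineMap (v i) (v j) s) =
      (a i * (1 - s) + a j * s) + (b i * (1 - s) ^ 2 + b j * s ^ 2) := by
  simp only [baryQuadratic, barycentric_lineMap hkr]
  rw [Fintype.sum_eq_add i j hij (by simp +contextual),
    Fintype.sum_eq_add i j hij (by simp +contextual)]
  simp [hij, hij.symm]

theorem add_eq_zero_of_edge_integrals_eq_zero [Fintype ι] [DecidableEq ι]
    (hkr : ∀ i j, lam i (v j) = if i = j then 1 else 0) {a b : ι → ℝ} {w : ℝ → ℝ} {m : ℝ}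
    (hw : IntervalIntegrable w volume (-1) 1) (hw_even : w.Even)
    (hw_pos : ∀ᵐ t ∂volume.restrict (Set.Ioc (-1) 1), 0 < w t) {i j : ι} (hij : i ≠ j)
    (hI : ∫ t in (-1 : ℝ)..1,
      baryQuadratic lam a b (AffineMap.lineMap (v i) (v j) ((1 + t) / 2)) * w t = 0)
    (hL : ∫ t in (-1 : ℝ)..1, (t ^ 2 - m) *
      baryQuadratic lam a b (AffineMap.lineMap (v i) (v j) ((1 + t) / 2)) * w t = 0) :
    a i + a j = 0 ∧ b i + b j = 0 := by
  have hedge (t : ℝ) : baryQuadratic lam a b (AffineMap.lineMap (v i) (v j) ((1 + t) / 2)) =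
      ((a i + a j) / 2 + (b i + b j) / 4) + ((a j - a i) / 2 + (b j - b i) / 2) * t
        + (b i + b j) / 4 * t ^ 2 := by
    rw [baryQuadratic_lineMap hkr a b hij]
    ring
  simp only [hedge] at hI hL
  obtain ⟨hc₀, hc₂⟩ :=
    even_coeffs_eq_zero_of_integral_quadratic_mul one_pos hw hw_even hw_pos hI hL
  constructor <;> linarith

theorem eq_zero_of_forall_cyclic_add_eq_zero {G : Type*} [AddCommGroup G] [IsAddTorsionFree G]
    {c : Fin 3 → G} (hc : ∀ j, c (j + 2) + c (j + 1) = 0) (i : Fin 3) : c i = 0 := by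
  have h₁ : c i + c (i + 2) = 0 := by simpa [add_assoc] using hc (i + 1)
  have h₂ : c (i + 1) + c i = 0 := by simpa [add_assoc] using hc (i + 2)
  have htwo : 2 • c i = 0 := calc
    2 • c i = (c i + c (i + 2)) + (c (i + 1) + c i) - (c (i + 2) + c (i + 1)) := by abel
    _ = 0 := by rw [h₁, h₂, hc i, add_zero, sub_zero]
  exact two_nsmul_eq_zero.mp htwo

theorem unisolvent_first_family_general {v : Fin 3 → P} {lam : Fin 3 → P →ᵃ[ℝ] ℝ}
    (hkr : ∀ i j, lam i (v j) = if i = j then 1 else 0) {w : ℝ → ℝ} {m : ℝ}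
    (hw : IntervalIntegrable w volume (-1) 1) (hw_even : w.Even)
    (hw_pos : ∀ᵐ t ∂volume.restrict (Set.Ioc (-1) 1), 0 < w t) {a b : Fin 3 → ℝ}
    (hI : ∀ j : Fin 3, ∫ t in (-1 : ℝ)..1,
      baryQuadratic lam a b (AffineMap.lineMap (v (j + 2)) (v (j + 1)) ((1 + t) / 2)) * w t = 0)
    (hL : ∀ j : Fin 3, ∫ t in (-1 : ℝ)..1, (t ^ 2 - m) *
      baryQuadratic lam a b (AffineMap.lineMap (v (j + 2)) (v (j + 1)) ((1 + t) / 2)) * w t = 0) :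
    (∀ i, a i = 0) ∧ ∀ i, b i = 0 := by
  have hends (j : Fin 3) : a (j + 2) + a (j + 1) = 0 ∧ b (j + 2) + b (j + 1) = 0 :=
    add_eq_zero_of_edge_integrals_eq_zero hkr hw hw_even hw_pos (by simp) (hI j) (hL j)
  exact ⟨eq_zero_of_forall_cyclic_add_eq_zero fun j => (hends j).1,
    eq_zero_of_forall_cyclic_add_eq_zero fun j => (hends j).2⟩

end BarycentricQuadratic

theorem edgeParam_eq_lineMap (v : Fin 3 → ℝ × ℝ) (j : Fin 3) (t : ℝ) :
    edgeParam v j t = AffineMap.lineMap (v (j + 2)) (v (j + 1)) ((1 + t) / 2) := by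
  rw [AffineMap.lineMap_apply_module, edgeParam, add_comm,
    show 1 - (1 + t) / 2 = (1 - t) / 2 by ring]

theorem gammaMod_pos {s z : ℝ} (hs : 0 < s) (hz : 0 < z) : 0 < gammaMod s z := by
  have hint : IntervalIntegrable (fun u : ℝ => u ^ (s - 1) * Real.exp (-u)) volume 0 z :=
    (intervalIntegral.intervalIntegrable_rpow' (by linarith)).mul_continuousOn (by fun_prop)
  have hlow : 0 < lowGamma s z :=
    intervalIntegral.intervalIntegral_pos_of_pos_on hint
      (fun u hu => mul_pos (Real.rpow_pos_of_pos hu.1 _) (Real.exp_pos _)) hz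
  exact div_pos hlow (Real.rpow_pos_of_pos hz s)

theorem kTilde_even (σ μ : ℝ) : (kTilde σ μ).Even := fun t => by simp only [kTilde, neg_sq]

theorem kTilde_pos {σ μ : ℝ} (hσ : 0 < σ) (hμ : 3 / 4 < μ) {t : ℝ} (ht : t ≠ 0) :
    0 < kTilde σ μ t := by
  have hgamma : 0 < gammaMod ((4 * μ - 3) / (2 * μ)) (1 / (2 * σ ^ (2 * μ))) :=
    gammaMod_pos (div_pos (by linarith) (by linarith)) (by positivity)
  have : 0 < μ := by linarith
  unfold kTilde
  positivity

theorem intervalIntegrable_sq_rpow {p : ℝ} (hp : -1 < 2 * p) (a b : ℝ) :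
    IntervalIntegrable (fun t : ℝ => (t ^ 2) ^ p) volume a b := by
  refine intervalIntegrable_of_even (fun t => by simp only [neg_sq]) fun x hx => ?_
  refine (intervalIntegral.intervalIntegrable_rpow' hp).congr fun t ht => ?_
  rw [Set.uIoc_of_le hx.le] at ht
  simp only [Real.rpow_mul ht.1.le, Real.rpow_two]

theorem intervalIntegrable_kTilde (σ : ℝ) {μ : ℝ} (hμ : 3 / 4 < μ) (a b : ℝ) :
    IntervalIntegrable (kTilde σ μ) volume a b := by
  have hpow : Continuous fun t : ℝ => (t ^ 2 / σ ^ 2) ^ μ :=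
    ((continuous_pow 2).div_const _).rpow_const fun _ => Or.inr (by linarith)
  have hexp : Continuous fun t : ℝ => Real.exp (-(1 / 2) * (t ^ 2 / σ ^ 2) ^ μ) := by fun_prop
  exact ((intervalIntegrable_sq_rpow (by linarith) a b).const_mul _).mul_continuousOn
    hexp.continuousOn

theorem ae_kTilde_pos {σ μ : ℝ} (hσ : 0 < σ) (hμ : 3 / 4 < μ) : ∀ᵐ t, 0 < kTilde σ μ t := by
  filter_upwards [Measure.ae_ne volume 0] with t ht using kTilde_pos hσ hμ ht

/-- Unisolvency of the first enriched triple: if a quadratic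
`p₂ = Σ aᵢ λᵢ + Σ bᵢ λᵢ²` is annihilated by all the six enriched edge functionals,
then all its coefficients vanish and `p₂ = 0`. -/
theorem unisolvent_first_family (v : Fin 3 → ℝ × ℝ) (hv : AffineIndependent ℝ v)
    (lam : Fin 3 → ℝ × ℝ → ℝ)
    (hlam : ∀ i, ∃ A : (ℝ × ℝ) →ᵃ[ℝ] ℝ, ∀ x, lam i x = A x)
    (hkr : ∀ i j, lam i (v j) = if i = j then (1:ℝ) else 0)
    (σ μ : ℝ) (hσ : 0 < σ) (hμ : 1 ≤ μ)
    (a b : Fin 3 → ℝ)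
    (hI : ∀ j : Fin 3,
      ∫ t in (-1:ℝ)..1,
        ((∑ i : Fin 3, a i * lam i (edgeParam v j t))
          + ∑ i : Fin 3, b i * (lam i (edgeParam v j t)) ^ 2) * kTilde σ μ t = 0)
    (hL : ∀ j : Fin 3,
      ∫ t in (-1:ℝ)..1,
        pPoly σ μ t *
          ((∑ i : Fin 3, a i * lam i (edgeParam v j t))
            + ∑ i : Fin 3, b i * (lam i (edgeParam v j t)) ^ 2) * kTilde σ μ t = 0) :
    (∀ i, a i = 0) ∧ (∀ i, b i = 0) ∧
      ∀ x : ℝ × ℝ, (∑ i : Fin 3, a i * lam i x) + ∑ i : Fin 3, b i * (lam i x) ^ 2 = 0 := by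
  choose A hA using hlam
  obtain rfl : lam = fun i x => A i x := funext₂ hA
  simp only [edgeParam_eq_lineMap] at hI hL
  have hμ' : 3 / 4 < μ := by linarith
  obtain ⟨ha, hb⟩ := unisolvent_first_family_general (m := tMom2 σ μ) hkr
    (intervalIntegrable_kTilde σ hμ' _ _) (kTilde_even σ μ)
    (ae_restrict_of_ae (ae_kTilde_pos hσ hμ')) hI hL
  exact ⟨ha, hb, fun x => by simp [ha, hb]⟩
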